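/- arXiv:1903.00429 — 2 statements merged into one kernel-verified Lean document; each statement's English description precedes it below -/
import Mathlib

section
/- Let (u₀^m)_{m∈ℕ} ⊆ C be a sequence converging in H to some u₀ ∈ C, and suppose that for each m ∈ ℕ there is an Obstacle Gradient Flow (u_m(t))_{t≥0} with initial datum u₀^m. Then there exists an Obstacle Gradient Flow (u(t))_{t≥0} with initial datum u₀ such that u_m → u in C([0,T],H) (uniformly on [0,T]) for every T > 0. Consequently, the set of initial data in C for which an Obstacle Gradient Flow exists is a closed subset of C. -/
open MeasureTheory Set Filter

noncomputable section

local notation "⟪" x ", " y "⟫" => @inner ℝ _ _ x y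

variable {H : Type*} [NormedAddCommGroup H] [InnerProductSpace ℝ H] [CompleteSpace H]

/-- Assumption 1: `E` is Fréchet differentiable with (Riesz) gradient `E'`, the gradient is
locally Lipschitz, `E` is sequentially weakly lower semicontinuous, bounded below by `α`,
and the gradient is bounded on balls. -/
structure Assumption1 (E : H → ℝ) (E' : H → H) (α : ℝ) : Prop where
  grad : ∀ u : H, HasGradientAt E (E' u) u
  locLip : LocallyLipschitz E'
  wlsc : ∀ (x : ℕ → H) (y : H),
    (∀ φ : H, Tendsto (fun n => ⟪x n, φ⟫) atTop (nhds ⟪y, φ⟫)) →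
    E y ≤ Filter.liminf (fun n => E (x n)) atTop
  lowerBound : ∀ u : H, α ≤ E u
  gradBdd : ∀ R : ℝ, 0 < R → ∃ M : ℝ, ∀ w : H, ‖w‖ ≤ R → ‖E' w‖ ≤ M

/-- An Obstacle Gradient Flow `u` (with a.e. derivative `u'`) with initial datum `u₀ ∈ C`. -/
structure IsOGF (C : Set H) (E' : H → H) (u u' : ℝ → H) (u₀ : H) : Prop where
  init : u 0 = u₀
  mem : ∀ t : ℝ, 0 ≤ t → u t ∈ C
  derivAe : ∀ᵐ t ∂(volume.restrict (Ioi (0:ℝ))), HasDerivAt u (u' t) t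
  sqInt : ∀ T : ℝ, 0 < T → IntegrableOn (fun t => ‖u' t‖ ^ 2) (Ioc 0 T)
  ftc : ∀ s t : ℝ, 0 ≤ s → s ≤ t → u t - u s = ∫ r in s..t, u' r
  fvi : ∀ᵐ t ∂(volume.restrict (Ioi (0:ℝ))),
    ∀ v ∈ C, 0 ≤ ⟪u' t, v - u t⟫ + ⟪E' (u t), v - u t⟫

/-- Assumption 2: a gradient growth condition with a nondecreasing continuous modulus `ζ`. -/
structure Assumption2 (E' : H → H) (ζ : ℝ → ℝ) : Prop where
  mono : MonotoneOn ζ (Ici 0)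
  cont : ContinuousOn ζ (Ici 0)
  nonneg : ∀ r : ℝ, 0 ≤ r → 0 ≤ ζ r
  bound : ∀ u v : H, ‖E' u - E' v‖ ≤ ζ (‖u‖ + ‖v‖) * ‖u - v‖

/-!
Along a flow the energy identity `E (u t) + ∫₀ᵗ ‖u'‖² = E u₀` bounds `‖u t - u₀‖` on bounded time
intervals in terms of `E u₀` and the lower bound of `E`, so flows with convergent initial data stay
in a common ball, on which the gradient is bounded and Lipschitz. Since `‖u'‖ ≤ ‖E' u‖`, the flows
are equi-Lipschitz in time. Testing the variational inequality of each of two flows with the other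
one gives `(‖u - v‖²)' ≤ 2 L ‖u - v‖²`, and Grönwall's inequality makes the sequence of flows
uniformly Cauchy.

The limit curve is Lipschitz, and it satisfies the evolution variational inequality
`‖p - u t‖² - ‖p - u s‖² ≤ 2 ∫ₛᵗ ⟪E' u, p - u⟫`, which involves no time derivative and hence
survives uniform convergence. A Lipschitz curve in a Hilbert space is the primitive of any weak
`L²` cluster point of its difference quotients, so it is differentiable almost everywhere;
differentiating the evolution variational inequality at such times gives back the flow variational
inequality.
-/

open scoped NNReal Topology

section UniformConvergence

theorem tendstoUniformlyOn_comp_of_isCompact_image {ι α β γ : Type*} [UniformSpace β]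
    [UniformSpace γ] {F : ι → α → β} {f : α → β} {l : Filter ι} {s : Set α} {φ : β → γ}
    (hφ : Continuous φ) (hF : TendstoUniformlyOn F f l s) (hs : IsCompact (f '' s)) :
    TendstoUniformlyOn (fun i x => φ (F i x)) (fun x => φ (f x)) l s := by
  intro r hr
  filter_upwards [hF _ (hs.uniformContinuousAt_of_continuousAt φ
    (fun _ _ => hφ.continuousAt) hr)] with i hi x hx
  exact hi x hx (mem_image_of_mem f hx)

theorem exists_forall_tendstoUniformlyOn_of_uniformCauchySeqOn {α β κ : Type*} [UniformSpace β]
    [CompleteSpace β] [Nonempty β] {F : ℕ → α → β} {s : κ → Set α}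
    (hF : ∀ k, UniformCauchySeqOn F atTop (s k)) :
    ∃ f : α → β, ∀ k, TendstoUniformlyOn F f atTop (s k) :=
  ⟨fun x => limUnder atTop fun n => F n x, fun k =>
    (hF k).tendstoUniformlyOn_of_tendsto fun _ hx => ((hF k).cauchySeq hx).tendsto_limUnder⟩

end UniformConvergence

section AbsolutelyContinuous

theorem exists_lipschitzOnWith_comp_of_isCompact {X Y Z : Type*} [PseudoMetricSpace X]
    [PseudoMetricSpace Y] [PseudoMetricSpace Z] {f : X → Y} {g : Y → Z} {s : Set X} {K : ℝ≥0}
    (hg : LocallyLipschitz g) (hf : LipschitzOnWith K f s) (hs : IsCompact s) :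
    ∃ K', LipschitzOnWith K' (g ∘ f) s := by
  have : CompactSpace s := isCompact_iff_compactSpace.1 hs
  have hgf : LocallyLipschitz (s.domRestrict (g ∘ f)) := hg.comp hf.to_restrict.locallyLipschitz
  obtain ⟨K', hK'⟩ := (hgf.locallyLipschitzOn (s := univ)).exists_lipschitzOnWith_of_compact
    isCompact_univ
  exact ⟨K', lipschitzOnWith_iff_restrict.2 (lipschitzOnWith_univ.1 hK')⟩

theorem absolutelyContinuousOnInterval_comp_of_locallyLipschitz {X Y : Type*} [PseudoMetricSpace X]
    [PseudoMetricSpace Y] {f : ℝ → X} {g : X → Y} {a b : ℝ} {K : ℝ≥0} (hg : LocallyLipschitz g)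
    (hf : LipschitzOnWith K f (uIcc a b)) : AbsolutelyContinuousOnInterval (g ∘ f) a b :=
  (exists_lipschitzOnWith_comp_of_isCompact hg hf isCompact_uIcc).choose_spec
    |>.absolutelyContinuousOnInterval

theorem sub_le_integral_of_deriv_le_ae {g φ : ℝ → ℝ} {a b : ℝ} (hab : a ≤ b)
    (hg : AbsolutelyContinuousOnInterval g a b) (hφ : IntervalIntegrable φ volume a b)
    (hle : ∀ᵐ t ∂volume.restrict (Ioc a b), deriv g t ≤ φ t) :
    g b - g a ≤ ∫ t in a..b, φ t := by
  rw [← hg.integral_deriv_eq_sub]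
  refine intervalIntegral.integral_mono_ae_restrict hab hg.intervalIntegrable_deriv hφ ?_
  rwa [← restrict_Ioc_eq_restrict_Icc]

theorem le_exp_mul_of_deriv_le_ae {g : ℝ → ℝ} {a b c : ℝ} (hab : a ≤ b)
    (hg : AbsolutelyContinuousOnInterval g a b)
    (hle : ∀ᵐ t ∂volume.restrict (Ioc a b), deriv g t ≤ c * g t) :
    g b ≤ Real.exp (c * (b - a)) * g a := by
  have hexp : AbsolutelyContinuousOnInterval (fun t => Real.exp (-c * t)) a b :=
    ContDiffOn.absolutelyContinuousOnInterval (by fun_prop)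
  have hdiff : ∀ᵐ t ∂volume.restrict (Ioc a b), DifferentiableAt ℝ g t :=
    (ae_restrict_iff' measurableSet_Ioc).2 <| hg.ae_differentiableAt.mono fun t ht hm =>
      ht (uIcc_of_le hab ▸ Ioc_subset_Icc_self hm)
  have hmono : Real.exp (-c * b) * g b - Real.exp (-c * a) * g a ≤ ∫ _ in a..b, (0 : ℝ) := by
    refine sub_le_integral_of_deriv_le_ae hab (hexp.fun_mul hg) intervalIntegrable_const ?_
    filter_upwards [hle, hdiff] with t ht hd
    have hderiv : HasDerivAt (fun t => Real.exp (-c * t) * g t)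
        (Real.exp (-c * t) * (-c * 1) * g t + Real.exp (-c * t) * deriv g t) t :=
      ((hasDerivAt_id t).const_mul (-c)).exp.mul hd.hasDerivAt
    rw [hderiv.deriv]
    nlinarith [Real.exp_pos (-c * t)]
  have hcancel : Real.exp (c * b) * Real.exp (-c * b) = 1 := by
    rw [← Real.exp_add, neg_mul, add_neg_cancel, Real.exp_zero]
  rw [intervalIntegral.integral_zero, sub_nonpos] at hmono
  calc g b = Real.exp (c * b) * (Real.exp (-c * b) * g b) := by rw [← mul_assoc, hcancel, one_mul]
    _ ≤ Real.exp (c * b) * (Real.exp (-c * a) * g a) := by gcongr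
    _ = Real.exp (c * (b - a)) * g a := by
        rw [← mul_assoc, ← Real.exp_add]
        ring_nf

end AbsolutelyContinuous

section LipschitzCurve

variable {F : Type*} [NormedAddCommGroup F] [InnerProductSpace ℝ F] [CompleteSpace F]

-- Banach–Alaoglu, transported to `F` by the Riesz isometry.
theorem exists_forall_tendsto_inner_of_norm_le {ι : Type*} (l : Ultrafilter ι) {x : ι → F} {K : ℝ}
    (hx : ∀ i, ‖x i‖ ≤ K) : ∃ w : F, ∀ c, Tendsto (fun i => ⟪c, x i⟫) l (𝓝 ⟪c, w⟫) := by
  let G : ι → WeakDual ℝ F := fun i => StrongDual.toWeakDual (InnerProductSpace.toDual ℝ F (x i))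
  have hmem : ∀ i, G i ∈ WeakDual.toStrongDual ⁻¹' Metric.closedBall (0 : StrongDual ℝ F) K :=
    fun i => mem_closedBall_zero_iff.2 <|
      ((InnerProductSpace.toDual ℝ F).norm_map (x i)).trans_le (hx i)
  obtain ⟨φ, -, hφ⟩ := (WeakDual.isCompact_closedBall 0 K).ultrafilter_le_nhds (l.map G)
    (le_principal_iff.2 <| mem_map.2 <| Eventually.of_forall hmem)
  refine ⟨(InnerProductSpace.toDual ℝ F).symm (WeakDual.toStrongDual φ), fun c => ?_⟩
  have hc : Tendsto (fun i => ⟪x i, c⟫) l (𝓝 (φ c)) :=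
    ((WeakDual.eval_continuous (𝕜 := ℝ) c).tendsto φ).comp hφ
  simp_rw [real_inner_comm _ c, InnerProductSpace.toDual_symm_apply]
  exact hc

theorem tendsto_integral_slope_zero {G : Type*} [NormedAddCommGroup G] [NormedSpace ℝ G]
    [CompleteSpace G] {f : ℝ → G} (hf : Continuous f) (s t : ℝ) :
    Tendsto (fun h => ∫ r in s..t, h⁻¹ • (f (r + h) - f r)) (𝓝[≠] 0) (𝓝 (f t - f s)) := by
  have hint : ∀ a b, IntervalIntegrable f volume a b := hf.intervalIntegrable
  have hlim : ∀ a, Tendsto (fun h => h⁻¹ • ∫ r in a..a + h, f r) (𝓝[≠] 0) (𝓝 (f a)) := fun a => by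
    simpa using (hf.integral_hasStrictDerivAt a a).hasDerivAt.tendsto_slope_zero
  refine ((hlim t).sub (hlim s)).congr fun h => ?_
  have hshift : Continuous fun r => f (r + h) := by fun_prop
  rw [intervalIntegral.integral_smul, intervalIntegral.integral_sub
    (hshift.intervalIntegrable s t) (hint s t),
    intervalIntegral.integral_comp_add_right, ← smul_sub,
    intervalIntegral.integral_interval_sub_interval_comm' (hint _ _) (hint _ _) (hint _ _)]

theorem exists_forall_integral_eq_sub_of_lipschitzWith {f : ℝ → F} {K : ℝ≥0}
    (hf : LipschitzWith K f) (a b : ℝ) : ∃ v : ℝ → F, IntegrableOn v (Ioc a b) ∧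
      ∀ s t, a ≤ s → s ≤ t → t ≤ b → ∫ r in s..t, v r = f t - f s := by
  let μ : Measure ℝ := volume.restrict (Ioc a b)
  let q : ℝ → ℝ → F := fun h r => h⁻¹ • (f (r + h) - f r)
  have hq_le : ∀ h r, ‖q h r‖ ≤ K := fun h r => by
    rw [norm_smul, norm_inv]
    refine inv_mul_le_of_le_mul₀ (norm_nonneg h) K.2 ?_
    simpa [mul_comm] using hf.norm_sub_le (r + h) r
  have hq_mem : ∀ h, MemLp (q h) 2 μ := fun h =>
    MemLp.of_bound (((hf.continuous.comp (continuous_add_const h)).sub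
      hf.continuous).const_smul h⁻¹).aestronglyMeasurable K (Eventually.of_forall (hq_le h))
  obtain ⟨w, hw⟩ := exists_forall_tendsto_inner_of_norm_le (Ultrafilter.of (𝓝[≠] (0 : ℝ)))
    (x := fun h => (hq_mem h).toLp) fun h => Lp.norm_le_of_ae_bound K.2 <|
      (hq_mem h).coeFn_toLp.mono fun r hr => hr ▸ hq_le h r
  refine ⟨w, (Lp.memLp w).integrable one_le_two,
    fun s t has hst htb => ext_inner_left ℝ fun c => ?_⟩
  have hset : ∀ v : ℝ → F, ∫ r in Ioc s t, v r ∂μ = ∫ r in s..t, v r := fun v => by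
    rw [intervalIntegral.integral_of_le hst, Measure.restrict_restrict measurableSet_Ioc,
      inter_eq_left.2 (Ioc_subset_Ioc has htb)]
  have hweak := hw (indicatorConstLp 2 (measurableSet_Ioc (a := s) (b := t)) (measure_ne_top μ _) c)
  have htoLp : ∀ h, ∫ r in Ioc s t, (hq_mem h).toLp (q h) r ∂μ = ∫ r in s..t, q h r := fun h => by
    rw [← hset]
    exact integral_congr_ae (ae_restrict_of_ae (hq_mem h).coeFn_toLp)
  simp only [L2.inner_indicatorConstLp_eq_inner_setIntegral, htoLp, hset] at hweak
  exact tendsto_nhds_unique hweak <|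
    (tendsto_const_nhds.inner (tendsto_integral_slope_zero hf.continuous s t)).mono_left
      (Ultrafilter.of_le _)

theorem exists_forall_integral_eq_sub_of_lipschitzOnWith {f : ℝ → F} {K : ℝ≥0} {a b : ℝ}
    (hab : a ≤ b) (hf : LipschitzOnWith K f (Icc a b)) : ∃ v : ℝ → F,
      IntervalIntegrable v volume a b ∧ ∀ t ∈ Icc a b, ∫ r in a..t, v r = f t - f a := by
  obtain ⟨v, hv, hvf⟩ := exists_forall_integral_eq_sub_of_lipschitzWith
    (hf.to_restrict.comp (LipschitzWith.projIcc hab)) a b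
  refine ⟨v, (intervalIntegrable_iff_integrableOn_Ioc_of_le hab).2 hv, fun t ht => ?_⟩
  rw [hvf a t le_rfl ht.1 ht.2]
  simp [projIcc_of_mem hab ht]

theorem ae_hasDerivAt_of_forall_integral_eq_sub {G : Type*} [NormedAddCommGroup G]
    [NormedSpace ℝ G] [CompleteSpace G] {f v : ℝ → G} {a b : ℝ} (hab : a ≤ b)
    (hv : IntervalIntegrable v volume a b) (hvf : ∀ t ∈ Icc a b, ∫ r in a..t, v r = f t - f a) :
    ∀ᵐ t ∂volume.restrict (Ioo a b), HasDerivAt f (v t) t := by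
  rw [ae_restrict_iff' measurableSet_Ioo]
  filter_upwards [hv.ae_hasDerivAt_integral] with t hderiv ht
  rw [uIcc_of_le hab] at hderiv
  have hprimitive := (hderiv (Ioo_subset_Icc_self ht) a ⟨le_rfl, hab⟩).add_const (f a)
  refine hprimitive.congr_of_eventuallyEq ?_
  filter_upwards [Ioo_mem_nhds ht.1 ht.2] with r hr
  rw [hvf r (Ioo_subset_Icc_self hr), sub_add_cancel]

theorem ae_differentiableAt_of_lipschitzOnWith_Icc {f : ℝ → F} {K : ℝ≥0} {a b : ℝ}
    (hf : LipschitzOnWith K f (Icc a b)) :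
    ∀ᵐ t ∂volume.restrict (Ioo a b), DifferentiableAt ℝ f t := by
  rcases le_total a b with hab | hba
  · obtain ⟨v, hv, hvf⟩ := exists_forall_integral_eq_sub_of_lipschitzOnWith hab hf
    exact (ae_hasDerivAt_of_forall_integral_eq_sub hab hv hvf).mono fun _ h => h.differentiableAt
  · simp [Ioo_eq_empty_of_le hba]

theorem integral_deriv_eq_sub_of_lipschitzOnWith_Icc {f : ℝ → F} {K : ℝ≥0} {a b : ℝ} (hab : a ≤ b)
    (hf : LipschitzOnWith K f (Icc a b)) : ∫ t in a..b, deriv f t = f b - f a := by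
  obtain ⟨v, hv, hvf⟩ := exists_forall_integral_eq_sub_of_lipschitzOnWith hab hf
  rw [← hvf b ⟨hab, le_rfl⟩]
  refine intervalIntegral.integral_congr_ae_restrict ?_
  rw [uIoc_of_le hab, ← Measure.restrict_congr_set Ioo_ae_eq_Ioc]
  exact (ae_hasDerivAt_of_forall_integral_eq_sub hab hv hvf).mono fun _ h => h.deriv

end LipschitzCurve

section LipschitzOnBalls

variable {F G : Type*} [NormedAddCommGroup F] [NormedAddCommGroup G] {f : F → G}

/-- Lipschitz continuity on bounded sets: on each closed ball around the origin, `f` is Lipschitz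
with a constant that may depend on the radius. -/
def LipschitzOnBalls (f : F → G) : Prop :=
  ∀ R : ℝ, ∃ K : ℝ≥0, LipschitzOnWith K f (Metric.closedBall 0 R)

theorem LipschitzOnBalls.continuous (hf : LipschitzOnBalls f) : Continuous f :=
  continuous_iff_continuousAt.2 fun x => by
    obtain ⟨K, hK⟩ := hf (‖x‖ + 1)
    exact hK.continuousOn.continuousAt (Metric.closedBall_mem_nhds_of_mem (by simp))

theorem LipschitzOnBalls.exists_norm_le (hf : LipschitzOnBalls f) (R : ℝ) :
    ∃ M : ℝ≥0, ∀ x, ‖x‖ ≤ R → ‖f x‖ ≤ M := by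
  obtain ⟨K, hK⟩ := hf (max R 0)
  refine ⟨‖f 0‖₊ + K * (max R 0).toNNReal, fun x hx => ?_⟩
  have hx' : ‖x‖ ≤ max R 0 := hx.trans (le_max_left R 0)
  calc ‖f x‖ ≤ ‖f 0‖ + ‖f x - f 0‖ := norm_le_norm_add_norm_sub' (f x) (f 0)
    _ ≤ ‖f 0‖ + K * ‖x - 0‖ := by
        gcongr
        exact hK.norm_sub_le (mem_closedBall_zero_iff.2 hx') (by simp)
    _ ≤ ‖f 0‖ + K * max R 0 := by
        rw [sub_zero]
        gcongr
    _ = _ := by simp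

theorem Assumption2.lipschitzOnBalls {f : F → F} {ζ : ℝ → ℝ} (hf : Assumption2 f ζ) :
    LipschitzOnBalls f := fun R => by
  refine ⟨(ζ (R + R)).toNNReal, LipschitzOnWith.of_dist_le_mul fun x hx y hy => ?_⟩
  rw [mem_closedBall_zero_iff] at hx hy
  have hsum : ‖x‖ + ‖y‖ ≤ R + R := add_le_add hx hy
  have hnonneg : 0 ≤ ‖x‖ + ‖y‖ := by positivity
  have hζ : ζ (‖x‖ + ‖y‖) ≤ (ζ (R + R)).toNNReal :=
    (hf.mono hnonneg (hnonneg.trans hsum) hsum).trans (Real.le_coe_toNNReal _)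
  simp only [dist_eq_norm]
  exact (hf.bound x y).trans (by gcongr)

end LipschitzOnBalls

section EVI

variable {F : Type*} [NormedAddCommGroup F] [InnerProductSpace ℝ F] {C : Set F} {E' : F → F}
  {u : ℝ → F}

/-- The integrated evolution variational inequality for the vector field `-E'` constrained to `C`.
In contrast to the flow variational inequality it does not mention the derivative of `u`, so it
passes to locally uniform limits. -/
def IsEVISolution (C : Set F) (E' : F → F) (u : ℝ → F) : Prop :=
  ∀ p ∈ C, ∀ ⦃s t : ℝ⦄, 0 ≤ s → s ≤ t →
    ‖p - u t‖ ^ 2 - ‖p - u s‖ ^ 2 ≤ 2 * ∫ r in s..t, ⟪E' (u r), p - u r⟫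

theorem IsEVISolution.of_tendstoUniformlyOn {U : ℕ → ℝ → F} (hE' : Continuous E')
    (hU : ∀ m, IsEVISolution C E' (U m)) (hUcont : ∀ m T, ContinuousOn (U m) (Icc 0 T))
    (hlim : ∀ T, TendstoUniformlyOn U u atTop (Icc 0 T)) : IsEVISolution C E' u := by
  intro p hp s t hs hst
  have hsub : uIcc s t ⊆ Icc 0 t := uIcc_of_le hst ▸ Icc_subset_Icc_left hs
  have hφ : Continuous fun x => ⟪E' x, p - x⟫ := by fun_prop
  have hucont : ContinuousOn u (Icc 0 t) :=
    (hlim t).continuousOn (Frequently.of_forall fun m => hUcont m t)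
  have hint : Tendsto (fun m => ∫ r in s..t, ⟪E' (U m r), p - U m r⟫) atTop
      (𝓝 (∫ r in s..t, ⟪E' (u r), p - u r⟫)) :=
    ((tendstoUniformlyOn_comp_of_isCompact_image hφ (hlim t)
      (isCompact_Icc.image_of_continuousOn hucont)).mono hsub)
      |>.tendsto_intervalIntegral_of_continuousOn
        (Eventually.of_forall fun m => hφ.comp_continuousOn ((hUcont m t).mono hsub))
  have hsq : ∀ r ∈ Icc 0 t, Tendsto (fun m => ‖p - U m r‖ ^ 2) atTop (𝓝 (‖p - u r‖ ^ 2)) :=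
    fun r hr => (((hlim t).tendsto_at hr).const_sub p).norm.pow 2
  exact le_of_tendsto_of_tendsto' ((hsq t ⟨hs.trans hst, le_rfl⟩).sub (hsq s ⟨hs, hst⟩))
    (hint.const_mul 2) fun m => hU m p hp hs hst

theorem IsEVISolution.inner_add_inner_nonneg (hu : IsEVISolution C E' u) (hE' : Continuous E')
    (hcont : ∀ T, ContinuousOn u (Icc 0 T)) {t : ℝ} (ht : 0 < t) {x : F} (hx : HasDerivAt u x t)
    {p : F} (hp : p ∈ C) : 0 ≤ ⟪x, p - u t⟫ + ⟪E' (u t), p - u t⟫ := by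
  let f : ℝ → ℝ := fun r => ⟪E' (u r), p - u r⟫
  have hfcont : ∀ T, ContinuousOn f (Icc 0 T) := fun T =>
    (by fun_prop : Continuous fun x => ⟪E' x, p - x⟫).comp_continuousOn (hcont T)
  have hfint : ∀ s r, 0 ≤ s → s ≤ r → IntervalIntegrable f volume s r := fun s r hs hsr =>
    ((hfcont r).mono (uIcc_of_le hsr ▸ Icc_subset_Icc_left hs)).intervalIntegrable
  have hmono : MonotoneOn (fun r => 2 * (∫ q in 0..r, f q) - ‖p - u r‖ ^ 2) (Ioi 0) := by
    intro s hs r hr hsr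
    have hsr_evi := hu p hp (le_of_lt hs) hsr
    rw [← intervalIntegral.integral_interval_sub_left (hfint 0 r le_rfl (le_of_lt hr))
      (hfint 0 s le_rfl (le_of_lt hs))] at hsr_evi
    dsimp only
    linarith
  have hIcc : Icc 0 (t + 1) ∈ 𝓝 t := Icc_mem_nhds ht (lt_add_one t)
  have hderiv : HasDerivAt (fun r => 2 * (∫ q in 0..r, f q) - ‖p - u r‖ ^ 2)
      (2 * f t - 2 * ⟪p - u t, -x⟫) t :=
    (intervalIntegral.integral_hasDerivAt_right (hfint 0 t le_rfl ht.le)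
      ((hfcont (t + 1)).mono Ioo_subset_Icc_self |>.stronglyMeasurableAtFilter isOpen_Ioo t
        ⟨ht, lt_add_one t⟩)
      ((hfcont (t + 1)).continuousAt hIcc)).const_mul 2 |>.sub (hx.const_sub p).norm_sq
  have hnonneg := hmono.derivWithin_nonneg (x := t)
  rw [derivWithin_of_mem_nhds (Ioi_mem_nhds ht), hderiv.deriv, inner_neg_right,
    real_inner_comm] at hnonneg
  linarith

theorem IsEVISolution.isOGF [CompleteSpace F] (hu : IsEVISolution C E' u) (hE' : Continuous E')
    (hmem : ∀ t, 0 ≤ t → u t ∈ C) (hlip : ∀ T, ∃ K : ℝ≥0, LipschitzOnWith K u (Icc 0 T)) :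
    IsOGF C E' u (deriv u) (u 0) := by
  have hderiv : ∀ᵐ t ∂volume.restrict (Ioi 0), HasDerivAt u (deriv u t) t := by
    have hIoo : ∀ n : ℕ, ∀ᵐ t : ℝ, t ∈ Ioo (0 : ℝ) n → DifferentiableAt ℝ u t := fun n =>
      (ae_restrict_iff' measurableSet_Ioo).1 <|
        ae_differentiableAt_of_lipschitzOnWith_Icc (hlip n).choose_spec
    rw [ae_restrict_iff' measurableSet_Ioi]
    filter_upwards [ae_all_iff.2 hIoo] with t ht hpos
    obtain ⟨n, hn⟩ := exists_nat_gt t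
    exact (ht n ⟨hpos, hn⟩).hasDerivAt
  refine ⟨rfl, hmem, hderiv, fun T _ => ?_, fun s t hs hst => ?_, ?_⟩
  · obtain ⟨K, hK⟩ := hlip (T + 1)
    refine Measure.integrableOn_of_bounded (M := (K : ℝ) ^ 2) measure_Ioc_lt_top.ne
      ((aestronglyMeasurable_deriv u _).norm.pow 2) ?_
    filter_upwards [ae_restrict_mem measurableSet_Ioc] with t ht
    have hle : ‖deriv u t‖ ≤ K := norm_deriv_le_of_lipschitzOn
      (Icc_mem_nhds ht.1 (ht.2.trans_lt (lt_add_one T))) hK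
    rw [norm_pow, norm_norm]
    gcongr
  · obtain ⟨K, hK⟩ := hlip t
    exact (integral_deriv_eq_sub_of_lipschitzOnWith_Icc hst
      (hK.mono (Icc_subset_Icc_left hs))).symm
  · have hcont : ∀ T, ContinuousOn u (Icc 0 T) := fun T => (hlip T).choose_spec.continuousOn
    filter_upwards [hderiv, ae_restrict_mem measurableSet_Ioi] with t hd ht p hp
    exact hu.inner_add_inner_nonneg hE' hcont ht hd hp

end EVI

section FlowProperties

variable {F : Type*} [NormedAddCommGroup F] [InnerProductSpace ℝ F] {C : Set F} {E' : F → F}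
  {u u' v v' : ℝ → F} {u₀ v₀ : F} {T : ℝ}

theorem inner_sub_sub_le_of_inner_nonneg {x y x' y' a b : F}
    (hx : 0 ≤ ⟪x', y - x⟫ + ⟪a, y - x⟫) (hy : 0 ≤ ⟪y', x - y⟫ + ⟪b, x - y⟫) :
    ⟪x - y, x' - y'⟫ ≤ ⟪x - y, b - a⟫ := by
  rw [← neg_sub x y, inner_neg_right, inner_neg_right] at hx
  rw [real_inner_comm, real_inner_comm (b - a), inner_sub_left, inner_sub_left]
  linarith

namespace IsOGF

-- Testing the flow inequality with `u r` for `r` on both sides of `t` turns it into an equality.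
theorem ae_norm_sq_eq (hu : IsOGF C E' u u' u₀) :
    ∀ᵐ t ∂volume.restrict (Ioi 0), ‖u' t‖ ^ 2 = -⟪E' (u t), u' t⟫ := by
  filter_upwards [hu.derivAe, hu.fvi, ae_restrict_mem measurableSet_Ioi] with t hd hfvi ht
  have hderiv : HasDerivAt (fun r => ⟪u' t + E' (u t), u r - u t⟫) ⟪u' t + E' (u t), u' t⟫ t := by
    simpa using (hasDerivAt_const t (u' t + E' (u t))).inner ℝ (hd.sub_const (u t))
  have hmin : IsLocalMin (fun r => ⟪u' t + E' (u t), u r - u t⟫) t := by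
    filter_upwards [Ioi_mem_nhds ht] with r hr
    simpa [inner_add_left] using hfvi (u r) (hu.mem r (le_of_lt hr))
  have hzero := hmin.hasDerivAt_eq_zero hderiv
  rw [inner_add_left, real_inner_self_eq_norm_sq] at hzero
  exact eq_neg_of_add_eq_zero_left hzero

theorem ae_norm_le (hu : IsOGF C E' u u' u₀) :
    ∀ᵐ t ∂volume.restrict (Ioi 0), ‖u' t‖ ≤ ‖E' (u t)‖ := by
  filter_upwards [hu.ae_norm_sq_eq] with t ht
  have hle : ‖u' t‖ * ‖u' t‖ ≤ ‖E' (u t)‖ * ‖u' t‖ := by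
    rw [← sq, ht, ← inner_neg_left, ← norm_neg (E' (u t))]
    exact real_inner_le_norm _ _
  rcases (norm_nonneg (u' t)).eq_or_lt with hzero | hpos
  · exact hzero ▸ norm_nonneg _
  · exact le_of_mul_le_mul_right hle hpos

theorem lipschitzOnWith_of_norm_le (hu : IsOGF C E' u u' u₀) {M : ℝ≥0}
    (hM : ∀ t ∈ Icc 0 T, ‖E' (u t)‖ ≤ M) : LipschitzOnWith M u (Icc 0 T) := by
  have hae := (ae_restrict_iff' measurableSet_Ioi).1 hu.ae_norm_le
  have hle : ∀ s ∈ Icc 0 T, ∀ t ∈ Icc 0 T, s ≤ t → ‖u t - u s‖ ≤ M * |t - s| := by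
    intro s hs t ht hst
    rw [hu.ftc s t hs.1 hst]
    refine intervalIntegral.norm_integral_le_of_norm_le_const_ae (hae.mono fun r hr hmem => ?_)
    rw [uIoc_of_le hst] at hmem
    have hpos : 0 < r := hs.1.trans_lt hmem.1
    exact (hr hpos).trans (hM r ⟨hpos.le, hmem.2.trans ht.2⟩)
  refine LipschitzOnWith.of_dist_le_mul fun t ht s hs => ?_
  rcases le_total s t with hst | hts
  · rw [dist_eq_norm, Real.dist_eq]
    exact hle s hs t ht hst
  · rw [dist_comm, dist_comm t, dist_eq_norm, Real.dist_eq]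
    exact hle t ht s hs hts

theorem exists_lipschitzOnWith (hu : IsOGF C E' u u' u₀)
    (hE' : ContinuousOn (fun t => E' (u t)) (Icc 0 T)) :
    ∃ K : ℝ≥0, LipschitzOnWith K u (Icc 0 T) := by
  obtain ⟨M, hM⟩ := isCompact_Icc.exists_bound_of_continuousOn hE'
  exact ⟨M.toNNReal,
    hu.lipschitzOnWith_of_norm_le fun t ht => (hM t ht).trans (Real.le_coe_toNNReal M)⟩

theorem ae_deriv_norm_sub_sq_le (hu : IsOGF C E' u u' u₀) (hv : IsOGF C E' v v' v₀) :
    ∀ᵐ t ∂volume.restrict (Ioi 0),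
      deriv (fun t => ‖u t - v t‖ ^ 2) t ≤ 2 * ⟪u t - v t, E' (v t) - E' (u t)⟫ := by
  filter_upwards [hu.derivAe, hv.derivAe, hu.fvi, hv.fvi,
    ae_restrict_mem measurableSet_Ioi] with t hdu hdv hfu hfv ht
  have hderiv : HasDerivAt (fun t => ‖u t - v t‖ ^ 2) (2 * ⟪u t - v t, u' t - v' t⟫) t :=
    (hdu.sub hdv).norm_sq
  rw [hderiv.deriv]
  gcongr
  exact inner_sub_sub_le_of_inner_nonneg (hfu _ (hv.mem t (le_of_lt ht)))
    (hfv _ (hu.mem t (le_of_lt ht)))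

variable [CompleteSpace F]

theorem aestronglyMeasurable (hu : IsOGF C E' u u' u₀) :
    AEStronglyMeasurable u' (volume.restrict (Ioi 0)) :=
  (aestronglyMeasurable_deriv u _).congr (hu.derivAe.mono fun _ ht => ht.deriv)

theorem memLp_two (hu : IsOGF C E' u u' u₀) (hT : 0 ≤ T) :
    MemLp u' 2 (volume.restrict (Ioc 0 T)) := by
  rcases hT.eq_or_lt with rfl | hT
  · simp
  · exact (memLp_two_iff_integrable_sq_norm
      (hu.aestronglyMeasurable.mono_set Ioc_subset_Ioi_self)).2 (hu.sqInt T hT)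

theorem intervalIntegrable_norm_sq (hu : IsOGF C E' u u' u₀) (hT : 0 ≤ T) :
    IntervalIntegrable (fun t => ‖u' t‖ ^ 2) volume 0 T :=
  (intervalIntegrable_iff_integrableOn_Ioc_of_le hT).2 (hu.memLp_two hT).norm.integrable_sq

theorem continuousOn (hu : IsOGF C E' u u' u₀) (hT : 0 ≤ T) : ContinuousOn u (Icc 0 T) := by
  have hint : IntervalIntegrable u' volume 0 T :=
    (intervalIntegrable_iff_integrableOn_Ioc_of_le hT).2 ((hu.memLp_two hT).integrable one_le_two)
  have hprimitive := intervalIntegral.continuousOn_primitive_interval' hint left_mem_uIcc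
  rw [uIcc_of_le hT] at hprimitive
  refine (hprimitive.add_const (u 0)).congr fun t ht => ?_
  exact (sub_eq_iff_eq_add.1 (hu.ftc 0 t le_rfl ht.1))

theorem isEVISolution (hu : IsOGF C E' u u' u₀) (hE' : Continuous E') : IsEVISolution C E' u := by
  intro p hp s t hs hst
  have hcont : ContinuousOn u (Icc 0 t) := hu.continuousOn (hs.trans hst)
  have hsub : uIcc s t ⊆ Icc 0 t := uIcc_of_le hst ▸ Icc_subset_Icc_left hs
  obtain ⟨K, hK⟩ := hu.exists_lipschitzOnWith (hE'.comp_continuousOn hcont)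
  have hsq : AbsolutelyContinuousOnInterval (fun r => ‖p - u r‖ ^ 2) s t :=
    absolutelyContinuousOnInterval_comp_of_locallyLipschitz (g := fun x => ‖p - x‖ ^ 2)
      ((contDiff_const.sub contDiff_id).norm_sq ℝ).locallyLipschitz (hK.mono hsub)
  have hint : IntervalIntegrable (fun r => ⟪E' (u r), p - u r⟫) volume s t :=
    ((by fun_prop : Continuous fun x => ⟪E' x, p - x⟫).comp_continuousOn
      (hcont.mono hsub)).intervalIntegrable
  rw [← intervalIntegral.integral_const_mul]
  refine sub_le_integral_of_deriv_le_ae hst hsq (hint.const_mul 2) ?_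
  refine ae_restrict_of_ae_restrict_of_subset (fun r hr => hs.trans_lt hr.1) ?_
  filter_upwards [hu.derivAe, hu.fvi] with r hd hfvi
  rw [(hd.const_sub p).norm_sq.deriv, inner_neg_right, real_inner_comm]
  linarith [hfvi p hp]

theorem norm_sub_le_exp_mul (hu : IsOGF C E' u u' u₀) (hv : IsOGF C E' v v' v₀) {S : Set F}
    {L : ℝ≥0} (hE' : LipschitzOnWith L E' S) (hT : 0 ≤ T) (huS : MapsTo u (Icc 0 T) S)
    (hvS : MapsTo v (Icc 0 T) S) : ‖u T - v T‖ ≤ Real.exp (L * T) * ‖u₀ - v₀‖ := by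
  obtain ⟨K, hK⟩ := hu.exists_lipschitzOnWith (hE'.continuousOn.comp (hu.continuousOn hT) huS)
  obtain ⟨K', hK'⟩ := hv.exists_lipschitzOnWith (hE'.continuousOn.comp (hv.continuousOn hT) hvS)
  have hsq : AbsolutelyContinuousOnInterval (fun t => ‖u t - v t‖ ^ 2) 0 T :=
    absolutelyContinuousOnInterval_comp_of_locallyLipschitz (f := fun t => u t - v t)
      (g := fun x => ‖x‖ ^ 2) (contDiff_norm_sq ℝ).locallyLipschitz (uIcc_of_le hT ▸ hK.sub hK')
  have hderiv : ∀ᵐ t ∂volume.restrict (Ioc 0 T),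
      deriv (fun t => ‖u t - v t‖ ^ 2) t ≤ 2 * L * ‖u t - v t‖ ^ 2 := by
    filter_upwards [ae_restrict_of_ae_restrict_of_subset Ioc_subset_Ioi_self
      (hu.ae_deriv_norm_sub_sq_le hv), ae_restrict_mem measurableSet_Ioc] with t hle ht
    have htT : t ∈ Icc 0 T := Ioc_subset_Icc_self ht
    calc deriv (fun t => ‖u t - v t‖ ^ 2) t ≤ 2 * ⟪u t - v t, E' (v t) - E' (u t)⟫ := hle
      _ ≤ 2 * (‖u t - v t‖ * (L * ‖v t - u t‖)) := by
          gcongr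
          exact (real_inner_le_norm _ _).trans (mul_le_mul_of_nonneg_left
            (hE'.norm_sub_le (hvS htT) (huS htT)) (norm_nonneg _))
      _ = 2 * L * ‖u t - v t‖ ^ 2 := by
          rw [norm_sub_rev (v t)]
          ring
  have hgronwall := le_exp_mul_of_deriv_le_ae hT hsq hderiv
  rw [hu.init, hv.init] at hgronwall
  refine (sq_le_sq₀ (norm_nonneg _) (by positivity)).1 ?_
  calc ‖u T - v T‖ ^ 2 ≤ Real.exp (2 * L * (T - 0)) * ‖u₀ - v₀‖ ^ 2 := hgronwall
    _ = (Real.exp (L * T) * ‖u₀ - v₀‖) ^ 2 := by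
        rw [mul_pow, ← Real.exp_nat_mul]
        push_cast
        ring_nf

end IsOGF

end FlowProperties

section Energy

variable {F : Type*} [NormedAddCommGroup F] [InnerProductSpace ℝ F] [CompleteSpace F]
  {C : Set F} {E : F → ℝ} {E' : F → F} {u u' : ℝ → F} {u₀ : F} {T : ℝ}

theorem contDiff_one_of_hasGradientAt (hgrad : ∀ x, HasGradientAt E (E' x) x)
    (hE' : Continuous E') : ContDiff ℝ 1 E :=
  contDiff_one_iff_hasFDerivAt.2
    ⟨_, (InnerProductSpace.toDual ℝ F).continuous.comp hE', fun x => (hgrad x).hasFDerivAt⟩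

namespace IsOGF

theorem energy_identity (hu : IsOGF C E' u u' u₀) (hgrad : ∀ x, HasGradientAt E (E' x) x)
    (hE' : Continuous E') (hT : 0 ≤ T) : E (u T) + ∫ t in 0..T, ‖u' t‖ ^ 2 = E u₀ := by
  obtain ⟨K, hK⟩ := hu.exists_lipschitzOnWith (hE'.comp_continuousOn (hu.continuousOn hT))
  have hac : AbsolutelyContinuousOnInterval (E ∘ u) 0 T :=
    absolutelyContinuousOnInterval_comp_of_locallyLipschitz
      (contDiff_one_of_hasGradientAt hgrad hE').locallyLipschitz (uIcc_of_le hT ▸ hK)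
  have hderiv : ∀ᵐ t ∂volume.restrict (uIoc 0 T), deriv (E ∘ u) t = -‖u' t‖ ^ 2 := by
    rw [uIoc_of_le hT]
    refine ae_restrict_of_ae_restrict_of_subset Ioc_subset_Ioi_self ?_
    filter_upwards [hu.derivAe, hu.ae_norm_sq_eq] with t hd hsq
    rw [((hgrad (u t)).hasFDerivAt.comp_hasDerivAt t hd).deriv,
      InnerProductSpace.toDual_apply_apply, hsq, neg_neg]
  have hftc := hac.integral_deriv_eq_sub
  rw [intervalIntegral.integral_congr_ae_restrict hderiv, intervalIntegral.integral_neg,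
    Function.comp_apply, Function.comp_apply, hu.init] at hftc
  linarith

theorem norm_sub_le_add_energy_sub (hu : IsOGF C E' u u' u₀)
    (hgrad : ∀ x, HasGradientAt E (E' x) x) (hE' : Continuous E') (hT : 0 ≤ T) :
    ‖u T - u₀‖ ≤ (T + (E u₀ - E (u T))) / 2 := by
  have hsq := hu.intervalIntegrable_norm_sq hT
  calc ‖u T - u₀‖ = ‖∫ t in 0..T, u' t‖ := by rw [← hu.ftc 0 T le_rfl hT, hu.init]
    _ ≤ ∫ t in 0..T, (1 + ‖u' t‖ ^ 2) / 2 :=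
        intervalIntegral.norm_integral_le_of_norm_le hT
          (Eventually.of_forall fun t _ => by nlinarith [sq_nonneg (‖u' t‖ - 1)])
          ((intervalIntegrable_const.add hsq).div_const 2)
    _ = (T + ∫ t in 0..T, ‖u' t‖ ^ 2) / 2 := by
        rw [intervalIntegral.integral_div, intervalIntegral.integral_add intervalIntegrable_const
          hsq, intervalIntegral.integral_const]
        simp
    _ = (T + (E u₀ - E (u T))) / 2 := by rw [← hu.energy_identity hgrad hE' hT, add_sub_cancel_left]

end IsOGF

end Energy

section Approximation

variable {F : Type*} [NormedAddCommGroup F] [InnerProductSpace ℝ F] [CompleteSpace F]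
  {C : Set F} {E : F → ℝ} {E' : F → F} {α : ℝ} {U U' : ℕ → ℝ → F} {u₀seq : ℕ → F} {u₀ : F}

theorem exists_forall_norm_le_of_isOGF (hgrad : ∀ x, HasGradientAt E (E' x) x)
    (hE' : Continuous E') (hα : ∀ x ∈ C, α ≤ E x)
    (hU : ∀ m, IsOGF C E' (U m) (U' m) (u₀seq m)) (hconv : Tendsto u₀seq atTop (𝓝 u₀)) (T : ℝ) :
    ∃ R, ∀ m, ∀ t ∈ Icc 0 T, ‖U m t‖ ≤ R := by
  have hcont : Continuous fun x => ‖x‖ + (T + (E x - α)) / 2 := by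
    have := (contDiff_one_of_hasGradientAt hgrad hE').continuous
    fun_prop
  obtain ⟨R, hR⟩ := ((hcont.tendsto u₀).comp hconv).bddAbove_range
  refine ⟨R, fun m t ht => ?_⟩
  calc ‖U m t‖ ≤ ‖u₀seq m‖ + ‖U m t - u₀seq m‖ := norm_le_norm_add_norm_sub' _ _
    _ ≤ ‖u₀seq m‖ + (t + (E (u₀seq m) - E (U m t))) / 2 := by
        gcongr
        exact (hU m).norm_sub_le_add_energy_sub hgrad hE' ht.1
    _ ≤ ‖u₀seq m‖ + (T + (E (u₀seq m) - α)) / 2 := by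
        gcongr
        · exact ht.2
        · exact hα _ ((hU m).mem t ht.1)
    _ ≤ R := hR (mem_range_self m)

theorem uniformCauchySeqOn_of_isOGF {S : Set F} {L : ℝ≥0} {T : ℝ} (hE' : LipschitzOnWith L E' S)
    (hU : ∀ m, IsOGF C E' (U m) (U' m) (u₀seq m)) (hUS : ∀ m, MapsTo (U m) (Icc 0 T) S)
    (hconv : CauchySeq u₀seq) : UniformCauchySeqOn U atTop (Icc 0 T) := by
  rw [Metric.uniformCauchySeqOn_iff]
  intro ε hε
  obtain ⟨N, hN⟩ := Metric.cauchySeq_iff.1 hconv (ε / Real.exp (L * T)) (by positivity)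
  refine ⟨N, fun m hm n hn t ht => ?_⟩
  have hIcc : Icc 0 t ⊆ Icc 0 T := Icc_subset_Icc_right ht.2
  calc dist (U m t) (U n t) ≤ Real.exp (L * t) * dist (u₀seq m) (u₀seq n) := by
        rw [dist_eq_norm, dist_eq_norm]
        exact (hU m).norm_sub_le_exp_mul (hU n) hE' ht.1 ((hUS m).mono_left hIcc)
          ((hUS n).mono_left hIcc)
    _ ≤ Real.exp (L * T) * dist (u₀seq m) (u₀seq n) := by
        gcongr
        exact ht.2
    _ < ε := (lt_div_iff₀' (Real.exp_pos _)).1 (hN m hm n hn)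

theorem exists_isOGF_tendstoUniformlyOn (hgrad : ∀ x, HasGradientAt E (E' x) x)
    (hE' : LipschitzOnBalls E') (hα : ∀ x ∈ C, α ≤ E x) (hC : IsClosed C)
    (hU : ∀ m, IsOGF C E' (U m) (U' m) (u₀seq m)) (hconv : Tendsto u₀seq atTop (𝓝 u₀)) :
    ∃ u u' : ℝ → F, IsOGF C E' u u' u₀ ∧ ∀ T, TendstoUniformlyOn U u atTop (Icc 0 T) := by
  choose R hR using exists_forall_norm_le_of_isOGF hgrad hE'.continuous hα hU hconv
  choose M hM using hE'.exists_norm_le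
  have hUlip : ∀ T m, LipschitzOnWith (M (R T)) (U m) (Icc 0 T) := fun T m =>
    (hU m).lipschitzOnWith_of_norm_le fun t ht => hM _ _ (hR T m t ht)
  obtain ⟨u, hu⟩ := exists_forall_tendstoUniformlyOn_of_uniformCauchySeqOn fun T =>
    uniformCauchySeqOn_of_isOGF (hE' (R T)).choose_spec hU
      (fun m t ht => mem_closedBall_zero_iff.2 (hR T m t ht)) hconv.cauchySeq
  have hpt : ∀ t, 0 ≤ t → Tendsto (fun m => U m t) atTop (𝓝 (u t)) := fun t ht =>
    (hu t).tendsto_at ⟨ht, le_rfl⟩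
  have hevi : IsEVISolution C E' u :=
    .of_tendstoUniformlyOn hE'.continuous (fun m => (hU m).isEVISolution hE'.continuous)
      (fun m T => (hUlip T m).continuousOn) hu
  have hmem : ∀ t, 0 ≤ t → u t ∈ C := fun t ht =>
    hC.mem_of_tendsto (hpt t ht) (Eventually.of_forall fun m => (hU m).mem t ht)
  have hlip : ∀ T, LipschitzOnWith (M (R T)) u (Icc 0 T) := fun T s hs t ht =>
    le_of_tendsto' ((hpt s hs.1).edist (hpt t ht.1)) fun m => hUlip T m hs ht
  have hinit : u 0 = u₀ :=
    tendsto_nhds_unique (hpt 0 le_rfl) (hconv.congr fun m => (hU m).init.symm)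
  exact ⟨u, deriv u, hinit ▸ hevi.isOGF hE'.continuous hmem fun T => ⟨_, hlip T⟩, hu⟩

theorem isClosed_setOf_exists_isOGF (hgrad : ∀ x, HasGradientAt E (E' x) x)
    (hE' : LipschitzOnBalls E') (hα : ∀ x ∈ C, α ≤ E x) (hC : IsClosed C) :
    IsClosed {w | w ∈ C ∧ ∃ u u' : ℝ → F, IsOGF C E' u u' w} := by
  refine IsSeqClosed.isClosed fun w w₀ hw hlim => ?_
  choose hwC V V' hV using hw
  obtain ⟨u, u', hu, -⟩ := exists_isOGF_tendstoUniformlyOn hgrad hE' hα hC hV hlim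
  exact ⟨hC.mem_of_tendsto hlim (Eventually.of_forall hwC), u, u', hu⟩

end Approximation

theorem approximation_of_flows_general {F : Type*} [NormedAddCommGroup F] [InnerProductSpace ℝ F]
    [CompleteSpace F] {E : F → ℝ} {E' : F → F} {α : ℝ} {C : Set F}
    (hgrad : ∀ x, HasGradientAt E (E' x) x) (hE' : LipschitzOnBalls E') (hα : ∀ x ∈ C, α ≤ E x)
    (hC : IsClosed C) {u₀seq : ℕ → F} {u₀ : F} (hconv : Tendsto u₀seq atTop (𝓝 u₀))
    {U U' : ℕ → ℝ → F} (hU : ∀ m, IsOGF C E' (U m) (U' m) (u₀seq m)) :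
    (∃ u u' : ℝ → F, IsOGF C E' u u' u₀ ∧
      ∀ T : ℝ, 0 < T → TendstoUniformlyOn U u atTop (Icc 0 T)) ∧
    IsClosed {w : F | w ∈ C ∧ ∃ u u' : ℝ → F, IsOGF C E' u u' w} := by
  obtain ⟨u, u', hu, hlim⟩ := exists_isOGF_tendstoUniformlyOn hgrad hE' hα hC hU hconv
  exact ⟨⟨u, u', hu, fun T _ => hlim T⟩, isClosed_setOf_exists_isOGF hgrad hE' hα hC⟩

/-- **Approximation of flows.** If initial data `u₀^m ∈ C` converge to `u₀ ∈ C` in `H` and each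
`u₀^m` admits an Obstacle Gradient Flow, then there is an Obstacle Gradient Flow starting at
`u₀` which is the limit of the flows in `C([0,T],H)` for every `T > 0`; consequently the set of
initial data in `C` admitting an Obstacle Gradient Flow is closed. -/
theorem approximation_of_flows
    (E : H → ℝ) (E' : H → H) (α : ℝ) (hE : Assumption1 E E' α)
    (ζ : ℝ → ℝ) (hζ : Assumption2 E' ζ)
    (C : Set H) (hCne : C.Nonempty) (hCcl : IsClosed C) (hCcv : Convex ℝ C)
    (u₀seq : ℕ → H) (hmem : ∀ m, u₀seq m ∈ C)
    (u₀ : H) (hu₀ : u₀ ∈ C) (hconv : Tendsto u₀seq atTop (nhds u₀))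
    (U U' : ℕ → ℝ → H) (hU : ∀ m, IsOGF C E' (U m) (U' m) (u₀seq m)) :
    (∃ u u' : ℝ → H, IsOGF C E' u u' u₀ ∧
      ∀ T : ℝ, 0 < T → TendstoUniformlyOn U u atTop (Icc 0 T)) ∧
    IsClosed {w : H | w ∈ C ∧ ∃ u u' : ℝ → H, IsOGF C E' u u' w} :=
  approximation_of_flows_general hE.grad hζ.lipschitzOnBalls (fun u _ => hE.lowerBound u) hCcl
    hconv hU
end
end

section
/- Let X = C be a closed convex subset of H endowed with the metric induced by the norm, and let (u(t))_{t≥0} be an Obstacle Gradient Flow in C. Then u is an EDE gradient flow for E on X, i.e. for every T > 0: E(u(T)) + (1/2)∫₀^T |u'|(s)² ds + (1/2)∫₀^T |∂E|(u(s))² ds = E(u(0)). -/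
open MeasureTheory Set Filter

noncomputable section

local notation "⟪" x ", " y "⟫" => @inner ℝ _ _ x y

variable {H : Type*} [NormedAddCommGroup H] [InnerProductSpace ℝ H] [CompleteSpace H]

open Topology in
/-- The metric derivative `|u'|(t) = limsup_{s → t} ‖u(s) - u(t)‖ / |s - t|` of a curve
`u : [0,∞) → H` (the limit is taken within the domain `[0,∞)`). -/
noncomputable def metricDeriv (u : ℝ → H) (t : ℝ) : ℝ :=
  Filter.limsup (fun s => ‖u s - u t‖ / |s - t|) (nhdsWithin t (Ici 0 \ {t}))

/-- The metric slope `|∂E|(w) = limsup_{v → w, v ∈ C, v ≠ w} (E(w) - E(v))⁺ / ‖w - v‖`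
of `E` at `w`, taken within the metric space `X = C`. -/
noncomputable def metricSlope (E : H → ℝ) (C : Set H) (w : H) : ℝ :=
  Filter.limsup (fun v => max (E w - E v) 0 / ‖w - v‖) (nhdsWithin w (C \ {w}))

/-!
Write `g = ∇E(u(t))` and `a = u̇(t)`. Testing the variational inequality with `v = u(s)` for `s` on
both sides of `t` gives `(a + g, a) = 0`, hence `(E ∘ u)'(t) = (g, a) = -‖a‖²`. Testing it with `v`
near `u(t)` gives `E(u(t)) - E(v) ≤ ‖a‖ ‖v - u(t)‖ + o(‖v - u(t)‖)`, so `|∂E|(u(t)) ≤ ‖a‖`, while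
the curve itself realises this rate of descent: `‖a‖² = -(E ∘ u)'(t) ≤ |∂E|(u(t)) ‖a‖`. So
`|∂E|(u(t)) = ‖a‖ = |u'|(t)` for almost every `t`. Since `E` is Lipschitz on the compact set
`u([0, T])`, `E ∘ u` is absolutely continuous and integrating its derivative gives the identity.
-/

open Topology

section AbsoluteContinuity

variable {X Y : Type*} [PseudoMetricSpace X] [PseudoMetricSpace Y]
variable {F : Type*} [NormedAddCommGroup F] [NormedSpace ℝ F]

lemma absolutelyContinuousOnInterval_of_dist_le_mul {f : ℝ → X} {g : ℝ → Y} {a b K : ℝ}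
    (hg : AbsolutelyContinuousOnInterval g a b)
    (h : ∀ x ∈ uIcc a b, ∀ y ∈ uIcc a b, dist (f x) (f y) ≤ K * dist (g x) (g y)) :
    AbsolutelyContinuousOnInterval f a b := by
  have hKg := Tendsto.const_mul K hg
  rw [mul_zero] at hKg
  refine squeeze_zero' (.of_forall fun I => Finset.sum_nonneg fun _ _ => dist_nonneg) ?_ hKg
  filter_upwards [mem_inf_of_right (mem_principal_self _)] with I hI
  rw [Finset.mul_sum]
  exact Finset.sum_le_sum fun i hi => h _ (hI.1 i hi).1 _ (hI.1 i hi).2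

lemma absolutelyContinuousOnInterval_comp_of_locallyLipschitzOn {V : Type*}
    [SeminormedAddCommGroup V] {f : V → X} {g : ℝ → V} {s : Set V} {a b : ℝ}
    (hf : LocallyLipschitzOn s f) (hg : AbsolutelyContinuousOnInterval g a b)
    (hgs : MapsTo g (uIcc a b) s) :
    AbsolutelyContinuousOnInterval (f ∘ g) a b := by
  have hcompact : IsCompact (g '' uIcc a b) := isCompact_uIcc.image_of_continuousOn hg.continuousOn
  obtain ⟨K, hK⟩ := (hf.mono hgs.image_subset).exists_lipschitzOnWith_of_compact hcompact
  exact absolutelyContinuousOnInterval_of_dist_le_mul hg fun _ hx _ hy =>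
    hK.dist_le_mul _ (mem_image_of_mem g hx) _ (mem_image_of_mem g hy)

lemma absolutelyContinuousOnInterval_intervalIntegral {f : ℝ → F} {a b c : ℝ}
    (hf : IntervalIntegrable f volume a b) (hc : c ∈ uIcc a b) :
    AbsolutelyContinuousOnInterval (fun x => ∫ r in c..x, f r) a b := by
  refine absolutelyContinuousOnInterval_of_dist_le_mul (K := 1)
    (hf.norm.absolutelyContinuousOnInterval_intervalIntegral hc) fun x hx y hy => ?_
  have hcx : IntervalIntegrable f volume c x := hf.mono_set (uIcc_subset_uIcc hc hx)
  have hcy : IntervalIntegrable f volume c y := hf.mono_set (uIcc_subset_uIcc hc hy)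
  rw [one_mul, dist_eq_norm, Real.dist_eq, intervalIntegral.integral_interval_sub_left hcx hcy,
    intervalIntegral.integral_interval_sub_left hcx.norm hcy.norm]
  exact intervalIntegral.norm_integral_le_abs_integral_norm

end AbsoluteContinuity

lemma intervalIntegral_congr_of_ae_Ioi {F : Type*} [NormedAddCommGroup F] [NormedSpace ℝ F]
    {μ : Measure ℝ} {f g : ℝ → F} {a b : ℝ} (hab : a ≤ b)
    (h : ∀ᵐ x ∂μ.restrict (Ioi a), f x = g x) :
    ∫ x in a..b, f x ∂μ = ∫ x in a..b, g x ∂μ := by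
  refine intervalIntegral.integral_congr_ae_restrict
    (ae_restrict_of_ae_restrict_of_subset ?_ h)
  rw [uIoc_of_le hab]
  exact Ioc_subset_Ioi_self

lemma locallyLipschitz_of_hasGradientAt {E : H → ℝ} {E' : H → H}
    (hE : ∀ w, HasGradientAt E (E' w) w) (hE' : Continuous E') : LocallyLipschitz E := by
  have hC1 : ContDiff ℝ 1 E := contDiff_one_iff_hasFDerivAt.2
    ⟨_, (InnerProductSpace.toDual ℝ H).continuous.comp hE', fun w => (hE w).hasFDerivAt⟩
  exact hC1.locallyLipschitz

lemma metricDeriv_eq_norm {F : Type*} [NormedAddCommGroup F] [NormedSpace ℝ F] {u : ℝ → F}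
    {a : F} {t : ℝ} (ht : 0 ≤ t) (hu : HasDerivWithinAt u a (Ici 0) t) : metricDeriv u t = ‖a‖ := by
  have : (𝓝[Ici 0 \ {t}] t).NeBot := accPt_principal_iff_nhdsWithin.1
    (uniqueDiffWithinAt_iff_accPt.1 (uniqueDiffOn_Ici 0 t ht))
  refine ((hasDerivWithinAt_iff_tendsto_slope.1 hu).norm.congr fun s => ?_).limsup_eq
  rw [slope_def_module, norm_smul, norm_inv, Real.norm_eq_abs, div_eq_inv_mul]

section MetricSlope

variable {F : Type*} [NormedAddCommGroup F] {E : F → ℝ} {C : Set F} {w : F} {b : ℝ}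

lemma max_sub_div_norm_sub_le {v : F} (hb : 0 ≤ b) (h : E w - E v ≤ b * ‖w - v‖) :
    max (E w - E v) 0 / ‖w - v‖ ≤ b :=
  div_le_of_le_mul₀ (norm_nonneg _) hb (max_le h (by positivity))

lemma metricSlope_nonneg (E : F → ℝ) (C : Set F) (w : F) : 0 ≤ metricSlope E C w := by
  rcases eq_or_neBot (𝓝[C \ {w}] w) with hbot | _
  -- At an isolated point of `C` the filter is `⊥` and the real `limsup` is `sInf univ = 0`.
  · simp [metricSlope, hbot, limsup, limsSup]
  · refine Real.sInf_nonneg fun c hc => ?_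
    have hle : ∀ᶠ v in 𝓝[C \ {w}] w, max (E w - E v) 0 / ‖w - v‖ ≤ c := hc
    obtain ⟨v, hv⟩ := hle.exists
    exact le_trans (by positivity) hv

lemma metricSlope_le_of_eventually_sub_le (hb : 0 ≤ b)
    (h : ∀ᶠ v in 𝓝[C] w, E w - E v ≤ b * ‖w - v‖) :
    metricSlope E C w ≤ b := by
  rcases eq_or_neBot (𝓝[C \ {w}] w) with hbot | _
  · simpa [metricSlope, hbot, limsup, limsSup] using hb
  · refine limsup_le_of_le (IsBoundedUnder.isCoboundedUnder_le
      (isBoundedUnder_of ⟨0, fun _ => by positivity⟩)) ?_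
    filter_upwards [h.filter_mono (nhdsWithin_mono w sdiff_subset)] with v hv
    exact max_sub_div_norm_sub_le hb hv

lemma eventually_sub_le_of_metricSlope_lt {M : ℝ}
    (hbdd : ∀ᶠ v in 𝓝[C] w, E w - E v ≤ M * ‖w - v‖) (hb : metricSlope E C w < b) :
    ∀ᶠ v in 𝓝[C] w, E w - E v ≤ b * ‖w - v‖ := by
  have hquot : IsBoundedUnder (· ≤ ·) (𝓝[C \ {w}] w)
      fun v => max (E w - E v) 0 / ‖w - v‖ := by
    refine isBoundedUnder_of_eventually_le (a := |M|) ?_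
    filter_upwards [hbdd.filter_mono (nhdsWithin_mono w sdiff_subset)] with v hv
    exact max_sub_div_norm_sub_le (abs_nonneg M) (hv.trans (by gcongr; exact le_abs_self M))
  have hlt := eventually_nhdsWithin_iff.1 (eventually_lt_of_limsup_lt hb hquot)
  filter_upwards [hlt.filter_mono nhdsWithin_le_nhds, self_mem_nhdsWithin] with v hv hvC
  rcases eq_or_ne v w with rfl | hvw
  · simp
  · have hpos : 0 < ‖w - v‖ := norm_pos_iff.2 (sub_ne_zero.2 hvw.symm)
    exact (le_max_left _ _).trans ((div_le_iff₀ hpos).1 (hv ⟨hvC, hvw⟩).le)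

end MetricSlope

lemma neg_deriv_le_mul_norm_of_eventually_sub_le {F : Type*} [NormedAddCommGroup F]
    [NormedSpace ℝ F] {f : ℝ → ℝ} {u : ℝ → F} {a : F} {f' b t : ℝ}
    (hf : HasDerivWithinAt f f' (Ioi t) t) (hu : HasDerivWithinAt u a (Ioi t) t)
    (h : ∀ᶠ s in 𝓝[>] t, f t - f s ≤ b * ‖u t - u s‖) : -f' ≤ b * ‖a‖ := by
  have hf_slope := ((hasDerivWithinAt_iff_tendsto_slope' self_notMem_Ioi).1 hf).neg
  have hu_slope := ((hasDerivWithinAt_iff_tendsto_slope' self_notMem_Ioi).1 hu).norm.const_mul b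
  refine le_of_tendsto_of_tendsto hf_slope hu_slope ?_
  filter_upwards [h, self_mem_nhdsWithin] with s hs hts
  have hpos : 0 < s - t := sub_pos.2 hts
  calc -slope f t s = (f t - f s) / (s - t) := by rw [slope_def_field, ← neg_div, neg_sub]
    _ ≤ b * ‖u t - u s‖ / (s - t) := by gcongr
    _ = b * ‖slope u t s‖ := by
      rw [slope_def_module, norm_smul, norm_inv, Real.norm_of_nonneg hpos.le,
        norm_sub_rev (u s), mul_div_assoc, div_eq_inv_mul]

section VariationalInequality

variable {E : H → ℝ} {C : Set H} {u : ℝ → H} {a g w : H} {t : ℝ}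

lemma hasDerivAt_comp_of_hasGradientWithinAt (hg : HasGradientWithinAt E g C (u t))
    (hu : HasDerivAt u a t) (huC : ∀ᶠ s in 𝓝 t, u s ∈ C) :
    HasDerivAt (E ∘ u) ⟪g, a⟫ t :=
  hg.hasFDerivWithinAt.comp_hasDerivAt t hu huC

lemma eventually_sub_le_of_forall_inner_nonneg (hg : HasGradientWithinAt E g C w)
    (hvi : ∀ v ∈ C, 0 ≤ ⟪a, v - w⟫ + ⟪g, v - w⟫) {ε : ℝ} (hε : 0 < ε) :
    ∀ᶠ v in 𝓝[C] w, E w - E v ≤ (‖a‖ + ε) * ‖w - v‖ := by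
  filter_upwards [(hasGradientWithinAt_iff_isLittleO.1 hg).def hε, self_mem_nhdsWithin]
    with v hv hvC
  rw [norm_sub_rev w v]
  linarith [hvi v hvC, real_inner_le_norm a (v - w), (abs_le.1 hv).1]

lemma metricSlope_le_norm_of_forall_inner_nonneg (hg : HasGradientWithinAt E g C w)
    (hvi : ∀ v ∈ C, 0 ≤ ⟪a, v - w⟫ + ⟪g, v - w⟫) : metricSlope E C w ≤ ‖a‖ :=
  le_of_forall_pos_le_add fun _ hε =>
    metricSlope_le_of_eventually_sub_le (by positivity)
      (eventually_sub_le_of_forall_inner_nonneg hg hvi hε)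

lemma neg_inner_le_metricSlope_mul_norm (hg : HasGradientWithinAt E g C (u t))
    (hu : HasDerivAt u a t) (huC : ∀ᶠ s in 𝓝 t, u s ∈ C) :
    -⟪g, a⟫ ≤ metricSlope E C (u t) * ‖a‖ := by
  -- With `-g` in place of `a` the variational inequality is trivial, so the slope is finite.
  have hbdd : ∀ᶠ v in 𝓝[C] u t, E (u t) - E v ≤ (‖-g‖ + 1) * ‖u t - v‖ :=
    eventually_sub_le_of_forall_inner_nonneg hg (by simp [inner_neg_left]) one_pos
  have hu_tendsto : Tendsto u (𝓝[>] t) (𝓝[C] u t) :=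
    (tendsto_nhdsWithin_iff.2 ⟨hu.continuousAt, huC⟩).mono_left nhdsWithin_le_nhds
  have hEu : HasDerivAt (E ∘ u) ⟪g, a⟫ t := hasDerivAt_comp_of_hasGradientWithinAt hg hu huC
  have hle : ∀ b > metricSlope E C (u t), -⟪g, a⟫ ≤ b * ‖a‖ := fun b hb =>
    neg_deriv_le_mul_norm_of_eventually_sub_le hEu.hasDerivWithinAt hu.hasDerivWithinAt
      (hu_tendsto.eventually (eventually_sub_le_of_metricSlope_lt hbdd hb))
  generalize metricSlope E C (u t) = m at hle ⊢
  exact ge_of_tendsto ((continuous_mul_const ‖a‖).continuousWithinAt (s := Ioi m))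
    (eventually_nhdsWithin_of_forall hle)

lemma inner_eq_neg_norm_sq_of_forall_inner_nonneg {F : Type*} [NormedAddCommGroup F]
    [InnerProductSpace ℝ F] {C : Set F} {u : ℝ → F} {a g : F} {t : ℝ}
    (hu : HasDerivAt u a t) (huC : ∀ᶠ s in 𝓝 t, u s ∈ C)
    (hvi : ∀ v ∈ C, 0 ≤ ⟪a, v - u t⟫ + ⟪g, v - u t⟫) : ⟪g, a⟫ = -‖a‖ ^ 2 := by
  have hmin : IsLocalMin (fun s => ⟪a + g, u s⟫) t := by
    filter_upwards [huC] with s hs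
    have := hvi (u s) hs
    rwa [← inner_add_left, inner_sub_right, sub_nonneg] at this
  have hderiv : HasDerivAt (fun s => ⟪a + g, u s⟫) ⟪a + g, a⟫ t := by
    simpa only [inner_zero_left, add_zero] using (hasDerivAt_const t (a + g)).inner ℝ hu
  have horth := hmin.hasDerivAt_eq_zero hderiv
  rw [inner_add_left, real_inner_self_eq_norm_sq] at horth
  linarith

lemma metricSlope_eq_norm_of_forall_inner_nonneg (hg : HasGradientWithinAt E g C (u t))
    (hu : HasDerivAt u a t) (huC : ∀ᶠ s in 𝓝 t, u s ∈ C)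
    (hvi : ∀ v ∈ C, 0 ≤ ⟪a, v - u t⟫ + ⟪g, v - u t⟫) :
    metricSlope E C (u t) = ‖a‖ := by
  refine (metricSlope_le_norm_of_forall_inner_nonneg hg hvi).antisymm ?_
  have hsq : ‖a‖ * ‖a‖ ≤ metricSlope E C (u t) * ‖a‖ := by
    have h := neg_inner_le_metricSlope_mul_norm hg hu huC
    rwa [inner_eq_neg_norm_sq_of_forall_inner_nonneg hu huC hvi, neg_neg, sq] at h
  rcases (norm_nonneg a).eq_or_lt with ha | ha
  · exact ha ▸ metricSlope_nonneg E C (u t)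
  · exact le_of_mul_le_mul_right hsq ha

end VariationalInequality

namespace IsOGF

section Curve

variable {F : Type*} [NormedAddCommGroup F] [InnerProductSpace ℝ F]
  {C : Set F} {E' : F → F} {u u' : ℝ → F} {u₀ : F}

lemma eventually_mem (hu : IsOGF C E' u u' u₀) {t : ℝ} (ht : 0 < t) : ∀ᶠ s in 𝓝 t, u s ∈ C :=
  (eventually_ge_nhds ht).mono hu.mem

lemma ae_metricDeriv_eq (hu : IsOGF C E' u u' u₀) :
    ∀ᵐ t ∂volume.restrict (Ioi (0 : ℝ)), metricDeriv u t = ‖u' t‖ := by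
  filter_upwards [hu.derivAe, self_mem_ae_restrict measurableSet_Ioi] with t hderiv ht
  exact metricDeriv_eq_norm (le_of_lt ht) hderiv.hasDerivWithinAt

end Curve

section Complete

variable {E : H → ℝ} {C : Set H} {E' : H → H} {u u' : ℝ → H} {u₀ : H}

lemma intervalIntegrable (hu : IsOGF C E' u u' u₀) {T : ℝ} (hT : 0 < T) :
    IntervalIntegrable u' volume 0 T := by
  rw [intervalIntegrable_iff_integrableOn_Ioc_of_le hT.le]
  have hmeas : AEStronglyMeasurable u' (volume.restrict (Ioc 0 T)) := by
    refine (aestronglyMeasurable_deriv u _).congr ?_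
    filter_upwards [ae_restrict_of_ae_restrict_of_subset Ioc_subset_Ioi_self hu.derivAe] with t ht
    exact ht.deriv
  exact ((memLp_two_iff_integrable_sq_norm hmeas).2 (hu.sqInt T hT)).integrable one_le_two

lemma absolutelyContinuousOnInterval (hu : IsOGF C E' u u' u₀) {T : ℝ} (hT : 0 < T) :
    AbsolutelyContinuousOnInterval u 0 T := by
  refine absolutelyContinuousOnInterval_of_dist_le_mul (K := 1)
    (absolutelyContinuousOnInterval_intervalIntegral (hu.intervalIntegrable hT)
      left_mem_uIcc) fun x hx y hy => ?_
  rw [uIcc_of_le hT.le] at hx hy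
  rw [one_mul, ← hu.ftc 0 x le_rfl hx.1, ← hu.ftc 0 y le_rfl hy.1, dist_sub_right]

lemma ae_metricSlope_eq (hgrad : ∀ w ∈ C, HasGradientWithinAt E (E' w) C w)
    (hu : IsOGF C E' u u' u₀) :
    ∀ᵐ t ∂volume.restrict (Ioi (0 : ℝ)), metricSlope E C (u t) = ‖u' t‖ := by
  filter_upwards [hu.derivAe, hu.fvi, self_mem_ae_restrict measurableSet_Ioi]
    with t hderiv hfvi ht
  exact metricSlope_eq_norm_of_forall_inner_nonneg (hgrad _ (hu.mem t (le_of_lt ht))) hderiv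
    (hu.eventually_mem ht) hfvi

lemma ae_hasDerivAt_comp (hgrad : ∀ w ∈ C, HasGradientWithinAt E (E' w) C w)
    (hu : IsOGF C E' u u' u₀) :
    ∀ᵐ t ∂volume.restrict (Ioi (0 : ℝ)), HasDerivAt (E ∘ u) (-‖u' t‖ ^ 2) t := by
  filter_upwards [hu.derivAe, hu.fvi, self_mem_ae_restrict measurableSet_Ioi]
    with t hderiv hfvi ht
  have hmem := hu.eventually_mem ht
  rw [← inner_eq_neg_norm_sq_of_forall_inner_nonneg hderiv hmem hfvi]
  exact hasDerivAt_comp_of_hasGradientWithinAt (hgrad _ (hu.mem t (le_of_lt ht))) hderiv hmem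

lemma energy_sub_eq_neg_integral_norm_sq (hE : LocallyLipschitzOn C E)
    (hgrad : ∀ w ∈ C, HasGradientWithinAt E (E' w) C w) (hu : IsOGF C E' u u' u₀)
    {T : ℝ} (hT : 0 < T) : E (u T) - E (u 0) = -∫ s in (0 : ℝ)..T, ‖u' s‖ ^ 2 := by
  have hmaps : MapsTo u (uIcc 0 T) C := fun t ht => hu.mem t ((uIcc_of_le hT.le ▸ ht).1)
  have hac : AbsolutelyContinuousOnInterval (E ∘ u) 0 T :=
    absolutelyContinuousOnInterval_comp_of_locallyLipschitzOn hE
      (hu.absolutelyContinuousOnInterval hT) hmaps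
  calc E (u T) - E (u 0) = ∫ s in (0 : ℝ)..T, deriv (E ∘ u) s := hac.integral_deriv_eq_sub.symm
    _ = ∫ s in (0 : ℝ)..T, -‖u' s‖ ^ 2 := intervalIntegral_congr_of_ae_Ioi hT.le
      ((hu.ae_hasDerivAt_comp hgrad).mono fun _ h => h.deriv)
    _ = -∫ s in (0 : ℝ)..T, ‖u' s‖ ^ 2 := intervalIntegral.integral_neg

end Complete

end IsOGF

theorem ogf_is_EDE_gradient_flow_general
    {E : H → ℝ} {E' : H → H} {C : Set H} {u u' : ℝ → H} {u₀ : H}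
    (hE : LocallyLipschitzOn C E) (hgrad : ∀ w ∈ C, HasGradientWithinAt E (E' w) C w)
    (hu : IsOGF C E' u u' u₀) :
    ∀ T : ℝ, 0 < T →
      E (u T) + (1/2) * (∫ s in (0:ℝ)..T, (metricDeriv u s) ^ 2)
        + (1/2) * (∫ s in (0:ℝ)..T, (metricSlope E C (u s)) ^ 2) = E (u 0) := by
  intro T hT
  have hderiv : ∫ s in (0:ℝ)..T, (metricDeriv u s) ^ 2 = ∫ s in (0:ℝ)..T, ‖u' s‖ ^ 2 :=
    intervalIntegral_congr_of_ae_Ioi hT.le (hu.ae_metricDeriv_eq.mono fun _ ht => by rw [ht])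
  have hslope : ∫ s in (0:ℝ)..T, (metricSlope E C (u s)) ^ 2 = ∫ s in (0:ℝ)..T, ‖u' s‖ ^ 2 :=
    intervalIntegral_congr_of_ae_Ioi hT.le
      ((hu.ae_metricSlope_eq hgrad).mono fun _ ht => by rw [ht])
  rw [hderiv, hslope]
  linarith [hu.energy_sub_eq_neg_integral_norm_sq hE hgrad hT]

/-- **EDE property of the Obstacle Gradient Flow.** An Obstacle Gradient Flow in the metric
space `X = C` is an EDE gradient flow: for every `T > 0`,
`E(u(T)) + (1/2)∫₀ᵀ |u'|(s)² ds + (1/2)∫₀ᵀ |∂E|(u(s))² ds = E(u(0))`. -/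
theorem ogf_is_EDE_gradient_flow
    (E : H → ℝ) (E' : H → H) (α : ℝ) (hE : Assumption1 E E' α)
    (C : Set H) (hCne : C.Nonempty) (hCcl : IsClosed C) (hCcv : Convex ℝ C)
    (u u' : ℝ → H) (u₀ : H) (hu₀ : u₀ ∈ C) (hu : IsOGF C E' u u' u₀) :
    ∀ T : ℝ, 0 < T →
      E (u T) + (1/2) * (∫ s in (0:ℝ)..T, (metricDeriv u s) ^ 2)
        + (1/2) * (∫ s in (0:ℝ)..T, (metricSlope E C (u s)) ^ 2) = E (u 0) :=
  ogf_is_EDE_gradient_flow_general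
    (locallyLipschitz_of_hasGradientAt hE.grad hE.locLip.continuous).locallyLipschitzOn
    (fun w _ => (hE.grad w).hasFDerivAt.hasFDerivWithinAt) hu
end
end
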